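/- Let G be a finite simple bipartite graph with bipartition classes U and V, and let a_1,…,a_n, b_n,…,b_1 be distinct vertices with A = {a_1,…,a_n} ⊆ U and B = {b_1,…,b_n} ⊆ V, such that G is noncrossing with respect to the cyclic sequence (a_1,…,a_n, b_n,…,b_1). Suppose L = G−A−B has exactly one perfect matching M_L. Then every family of pairwise vertex-disjoint M_L-alternating paths in G whose set of path-endpoints is exactly A ∪ B (each vertex of A ∪ B being an endpoint of exactly one path) consists of n paths in which, for each i = 1,…,n, one path joins a_i to b_i. -/

import Mathlib

/-- A perfect matching of the induced subgraph of `G` on the vertex set `s`,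
represented as a set `m` of edges of `G`: every edge of `m` is an edge of `G`
with both endpoints in `s`, and every vertex of `s` lies in exactly one edge of `m`. -/
def IsPMOn {α : Type*} (G : SimpleGraph α) (s : Finset α) (m : Finset (Sym2 α)) : Prop :=
  (∀ e ∈ m, e ∈ G.edgeSet ∧ ∀ v ∈ e, v ∈ s) ∧ ∀ v ∈ s, ∃! e, e ∈ m ∧ v ∈ e

/-- The number of perfect matchings of the induced subgraph of `G` on `s`. -/
noncomputable def pmCount {α : Type*} (G : SimpleGraph α) (s : Finset α) : ℕ :=
  Nat.card {m : Finset (Sym2 α) // IsPMOn G s m}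

open Classical in
/-- The sum, over all perfect matchings of the induced subgraph of `G` on `s`,
of the product of the weights of the edges of the matching. -/
noncomputable def pmSum {α R : Type*} [Fintype α] [DecidableEq α] [CommRing R]
    (G : SimpleGraph α) (w : Sym2 α → R) (s : Finset α) : R :=
  ∑ m ∈ Finset.univ.filter (fun m : Finset (Sym2 α) => IsPMOn G s m), ∏ e ∈ m, w e

/-- There are two vertex-disjoint paths in `G`, one joining `x₁` to `y₁` and one joining
`x₂` to `y₂`, whose internal vertices avoid `S`. -/
def DisjointPaths {α : Type*} (G : SimpleGraph α) (S : Set α) (x₁ y₁ x₂ y₂ : α) : Prop :=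
  ∃ (p : G.Walk x₁ y₁) (q : G.Walk x₂ y₂), p.IsPath ∧ q.IsPath ∧
    (∀ u ∈ p.support, u ∉ q.support) ∧
    (∀ u ∈ p.support, u ≠ x₁ → u ≠ y₁ → u ∉ S) ∧
    (∀ u ∈ q.support, u ≠ x₂ → u ≠ y₂ → u ∉ S)

/-- `G` is noncrossing with respect to the cyclic sequence given by the list `L`:
there are no indices `i < j < k < l` such that `G` contains two vertex-disjoint paths,
one joining `L[i]` to `L[k]` and one joining `L[j]` to `L[l]`, whose internal vertices
avoid the vertices of `L`. -/
def NoncrossingList {α : Type*} (G : SimpleGraph α) (L : List α) : Prop :=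
  ∀ i j k l : Fin L.length, i < j → j < k → k < l →
    ¬ DisjointPaths G {x | x ∈ L} (L.get i) (L.get k) (L.get j) (L.get l)

/-- `U, W` form a bipartition of the vertices of `G`. -/
def IsBipartition {α : Type*} [Fintype α] [DecidableEq α]
    (G : SimpleGraph α) (U W : Finset α) : Prop :=
  Disjoint U W ∧ U ∪ W = Finset.univ ∧
    ∀ ⦃x y⦄, G.Adj x y → ((x ∈ U ∧ y ∈ W) ∨ (x ∈ W ∧ y ∈ U))

/-- `P` is an `MH`-alternating path, where `MH` is the unique perfect matching of the
induced subgraph of `G` on the vertex set `sH`: `P` is a (nontrivial) path, among any two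
consecutive edges of `P` exactly one lies in `MH`, and for each endpoint the incident edge
of `P` lies in `MH` iff the endpoint belongs to `sH`. -/
def IsAltPath {α : Type*} (G : SimpleGraph α) (sH : Finset α) (MH : Finset (Sym2 α))
    {x y : α} (P : G.Walk x y) : Prop :=
  P.IsPath ∧ P.edges ≠ [] ∧
  P.edges.Chain' (fun e f => e ∈ MH ↔ f ∉ MH) ∧
  (∀ e ∈ P.edges.head?, (e ∈ MH ↔ x ∈ sH)) ∧
  (∀ e ∈ P.edges.getLast?, (e ∈ MH ↔ y ∈ sH))

/-- A family of pairwise vertex-disjoint `MH`-alternating paths in `G` whose set of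
path-endpoints is exactly `A`, each vertex of `A` being an endpoint of exactly one
path of the family. -/
def IsAltPathNest {α : Type*} (G : SimpleGraph α) (sH : Finset α) (MH : Finset (Sym2 α))
    (A : Finset α) (F : Finset (Σ x : α, Σ y : α, G.Walk x y)) : Prop :=
  (∀ p ∈ F, IsAltPath G sH MH p.2.2) ∧
  (∀ p ∈ F, ∀ q ∈ F, p ≠ q → ∀ u ∈ p.2.2.support, u ∉ q.2.2.support) ∧
  (∀ p ∈ F, p.1 ∈ A ∧ p.2.1 ∈ A) ∧
  (∀ v ∈ A, ∃! p, p ∈ F ∧ (v = p.1 ∨ v = p.2.1))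

/-- A 1-factor on `{1, …, n}`: a partition of `Fin n` into pairs, each pair recorded
as an ordered pair `(i, j)` with `i < j`. -/
def IsOneFactor (n : ℕ) (F : Finset (Fin n × Fin n)) : Prop :=
  (∀ p ∈ F, p.1 < p.2) ∧ ∀ v : Fin n, ∃! p, p ∈ F ∧ (v = p.1 ∨ v = p.2)

/-- The crossing number of a 1-factor: the number of pairs of pairs
`(i,j), (k,l)` in `F` with `i < k < j < l`. -/
def crossingNumber (n : ℕ) (F : Finset (Fin n × Fin n)) : ℕ :=
  ((F ×ˢ F).filter (fun q => q.1.1 < q.2.1 ∧ q.2.1 < q.1.2 ∧ q.1.2 < q.2.2)).card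

/-!
The end edges of a path of the nest lie outside the matching, since its ends lie outside `L`, so the
path has odd length and, by bipartiteness, joins some `a i` to some `b (σ i)`. A vertex of `A ∪ B`
inside a path would belong to two paths of the nest, so the paths are internally disjoint from
`A ∪ B`. If `i < j` and `σ j < σ i`, then `a i, a j, b (σ i), b (σ j)` occur in this order in
the cyclic sequence, so the paths at `a i` and `a j` violate noncrossing. Hence `σ` is a strictly
increasing self-map of `{1, …, n}`, that is, the identity.
-/

section Parity

variable {α : Type*} {G : SimpleGraph α}

theorem odd_length_iff_of_isChain_iff_not {p : α → Prop} {l : List α} (hne : l ≠ [])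
    (hl : l.IsChain fun x y => p x ↔ ¬ p y) :
    Odd l.length ↔ (p (l.head hne) ↔ p (l.getLast hne)) := by
  induction l with
  | nil => exact absurd rfl hne
  | cons x t ih =>
    cases t with
    | nil => simp
    | cons y t =>
      obtain ⟨hxy, ht⟩ := List.isChain_cons_cons.1 hl
      have hyt := ih (List.cons_ne_nil y t) ht
      rw [List.head_cons] at hyt
      rw [List.length_cons, Nat.odd_add_one, hyt, List.head_cons,
        List.getLast_cons (List.cons_ne_nil y t)]
      tauto

theorem odd_length_iff_of_isBipartiteWith {U V : Set α} (hG : G.IsBipartiteWith U V) {x y : α}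
    (w : G.Walk x y) : Odd w.length ↔ (x ∈ U ↔ y ∉ U) := by
  classical
  let side : G.Coloring Bool := .mk (fun v => decide (v ∈ U)) fun {v u} hvu => by
    have hv : v ∈ V → v ∉ U := fun h => Set.disjoint_right.1 hG.disjoint h
    have hu : u ∈ V → u ∉ U := fun h => Set.disjoint_right.1 hG.disjoint h
    have hsides := hG.mem_of_adj hvu
    rw [ne_eq, decide_eq_decide]
    tauto
  have hside (v : α) : side v = true ↔ v ∈ U := decide_eq_true_iff
  rw [side.odd_length_iff_not_congr w, hside, hside]
  tauto

theorem IsAltPath.odd_length {s : Finset α} {M : Finset (Sym2 α)} {x y : α} {w : G.Walk x y}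
    (hw : IsAltPath G s M w) (hx : x ∉ s) (hy : y ∉ s) : Odd w.length := by
  obtain ⟨-, hne, halt, hhead, hlast⟩ := hw
  have hfirst : w.edges.head hne ∉ M := (hhead _ (List.head_mem_head? hne)).not.2 hx
  have hfinal : w.edges.getLast hne ∉ M := (hlast _ (List.getLast_mem_getLast? hne)).not.2 hy
  rw [← w.length_edges, odd_length_iff_of_isChain_iff_not hne halt]
  exact iff_of_false hfirst hfinal

theorem IsBipartition.isBipartiteWith [Fintype α] [DecidableEq α] {U V : Finset α}
    (h : IsBipartition G U V) : G.IsBipartiteWith (U : Set α) (V : Set α) where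
  disjoint := Finset.disjoint_coe.2 h.1
  mem_of_adj := h.2.2

end Parity

/-- The walk `p` has ends `x` and `y`. The walks of a nest carry an orientation, which this
relation forgets: `x` may be the start or the finish of `p`. -/
def Joins {α : Type*} {G : SimpleGraph α} (p : Σ x : α, Σ y : α, G.Walk x y) (x y : α) : Prop :=
  (p.1 = x ∧ p.2.1 = y) ∨ (p.1 = y ∧ p.2.1 = x)

namespace Joins

variable {α : Type*} {G : SimpleGraph α} {p : Σ x : α, Σ y : α, G.Walk x y} {x y v : α}

theorem symm (h : Joins p x y) : Joins p y x := Or.symm h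

theorem isEnd_iff (h : Joins p x y) : v = p.1 ∨ v = p.2.1 ↔ v = x ∨ v = y := by
  rcases h with ⟨rfl, rfl⟩ | ⟨rfl, rfl⟩
  · exact Iff.rfl
  · exact or_comm

theorem left_mem_support (h : Joins p x y) : x ∈ p.2.2.support := by
  rcases h with ⟨rfl, -⟩ | ⟨-, rfl⟩
  · exact p.2.2.start_mem_support
  · exact p.2.2.end_mem_support

theorem right_mem_support (h : Joins p x y) : y ∈ p.2.2.support := h.symm.left_mem_support

theorem exists_isPath (h : Joins p x y) (hp : p.2.2.IsPath) :
    ∃ w : G.Walk x y, w.IsPath ∧ ∀ u, u ∈ w.support ↔ u ∈ p.2.2.support := by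
  rcases h with ⟨rfl, rfl⟩ | ⟨rfl, rfl⟩
  · exact ⟨p.2.2, hp, fun _ => Iff.rfl⟩
  · exact ⟨p.2.2.reverse, hp.reverse, fun u => by rw [SimpleGraph.Walk.support_reverse,
      List.mem_reverse]⟩

theorem left_unique {ι κ : Type*} {a : ι → α} {b : κ → α} (ha : Function.Injective a)
    (hab : ∀ i j, a i ≠ b j) {i i' : ι} {j j' : κ} (hij : Joins p (a i) (b j))
    (hij' : Joins p (a i') (b j')) : i = i' := by
  have hend : a i = p.1 ∨ a i = p.2.1 := hij.isEnd_iff.2 (Or.inl rfl)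
  exact ha ((hij'.isEnd_iff.1 hend).resolve_right (hab i j'))

end Joins

namespace IsAltPathNest

variable {α ι κ : Type*} {G : SimpleGraph α} {s S : Finset α} {M : Finset (Sym2 α)}
  {F : Finset (Σ x : α, Σ y : α, G.Walk x y)} {p q : Σ x : α, Σ y : α, G.Walk x y}
  {a : ι → α} {b : κ → α}

theorem eq_of_mem_support (hF : IsAltPathNest G s M S F) (hp : p ∈ F) (hq : q ∈ F) {u : α}
    (hup : u ∈ p.2.2.support) (huq : u ∈ q.2.2.support) : p = q := by
  by_contra hpq
  exact hF.2.1 p hp q hq hpq u hup huq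

theorem eq_or_eq_of_mem_support (hF : IsAltPathNest G s M S F) (hp : p ∈ F) {x y u : α}
    (hxy : Joins p x y) (hup : u ∈ p.2.2.support) (huS : u ∈ S) : u = x ∨ u = y := by
  obtain ⟨q, ⟨hq, huq⟩, -⟩ := hF.2.2.2 u huS
  have hu_supp : u ∈ q.2.2.support := by
    rcases huq with rfl | rfl
    · exact q.2.2.start_mem_support
    · exact q.2.2.end_mem_support
  obtain rfl := hF.eq_of_mem_support hp hq hup hu_supp
  exact hxy.isEnd_iff.1 huq

theorem disjointPaths (hF : IsAltPathNest G s M S F) (hp : p ∈ F) (hq : q ∈ F) (hpq : p ≠ q)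
    {x y x' y' : α} (hxy : Joins p x y) (hxy' : Joins q x' y') :
    DisjointPaths G (S : Set α) x y x' y' := by
  obtain ⟨w, hw, hw_supp⟩ := hxy.exists_isPath (hF.1 p hp).1
  obtain ⟨w', hw', hw'_supp⟩ := hxy'.exists_isPath (hF.1 q hq).1
  refine ⟨w, w', hw, hw', fun u hu hu' => ?_, fun u hu hux huy huS => ?_,
    fun u hu hux huy huS => ?_⟩
  · exact hpq (hF.eq_of_mem_support hp hq ((hw_supp u).1 hu) ((hw'_supp u).1 hu'))
  · exact (hF.eq_or_eq_of_mem_support hp hxy ((hw_supp u).1 hu) huS).elim hux huy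
  · exact (hF.eq_or_eq_of_mem_support hq hxy' ((hw'_supp u).1 hu) huS).elim hux huy

theorem exists_joins_of_isBipartiteWith (hF : IsAltPathNest G s M S F) {U V : Set α}
    (hG : G.IsBipartiteWith U V) (hsS : Disjoint s S) (hS : (S : Set α) = Set.range a ∪ Set.range b)
    (haU : ∀ i, a i ∈ U) (hbV : ∀ j, b j ∈ V) (hp : p ∈ F) : ∃ i j, Joins p (a i) (b j) := by
  have hends := hF.2.2.1 p hp
  have hodd : Odd p.2.2.length := (hF.1 p hp).odd_length
    (Finset.disjoint_right.1 hsS hends.1) (Finset.disjoint_right.1 hsS hends.2)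
  have hside := (odd_length_iff_of_isBipartiteWith hG p.2.2).1 hodd
  have hbU (j : κ) : b j ∉ U := Set.disjoint_right.1 hG.disjoint (hbV j)
  simp only [← Finset.mem_coe, hS, Set.mem_union, Set.mem_range] at hends
  obtain ⟨⟨i, hi⟩ | ⟨j, hj⟩, ⟨i', hi'⟩ | ⟨j', hj'⟩⟩ := hends
  · exact absurd (hi' ▸ haU i') (hside.1 (hi ▸ haU i))
  · exact ⟨i, j', Or.inl ⟨hi.symm, hj'.symm⟩⟩
  · exact ⟨i', j, Or.inr ⟨hj.symm, hi'.symm⟩⟩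
  · exact absurd (hside.2 (hj' ▸ hbU j')) (hj ▸ hbU j)

theorem exists_mem_joins (hF : IsAltPathNest G s M S F)
    (hjoin : ∀ p ∈ F, ∃ i j, Joins p (a i) (b j)) (hab : ∀ i j, a i ≠ b j) (haS : ∀ i, a i ∈ S)
    (i : ι) : ∃ p ∈ F, ∃ j, Joins p (a i) (b j) := by
  obtain ⟨p, ⟨hp, hi⟩, -⟩ := hF.2.2.2 (a i) (haS i)
  obtain ⟨i', j, hij⟩ := hjoin p hp
  have hii' : a i = a i' := (hij.isEnd_iff.1 hi).resolve_right (hab i j)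
  exact ⟨p, hp, j, hii' ▸ hij⟩

theorem card_eq [Fintype ι] (hF : IsAltPathNest G s M S F)
    (hjoin : ∀ p ∈ F, ∃ i j, Joins p (a i) (b j)) (ha : Function.Injective a)
    (hab : ∀ i j, a i ≠ b j) (haS : ∀ i, a i ∈ S) : F.card = Fintype.card ι := by
  choose p hpF j hpj using hF.exists_mem_joins hjoin hab haS
  refine (Finset.card_nbij p (fun i _ => hpF i) (fun i _ i' _ hii' => ?_) fun q hq => ?_).symm
  · exact Joins.left_unique ha hab (hpj i) (hii' ▸ hpj i')
  · obtain ⟨i, k, hik⟩ := hjoin q hq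
    exact ⟨i, Finset.mem_univ i, hF.eq_of_mem_support (hpF i) hq
      (hpj i).left_mem_support hik.left_mem_support⟩

end IsAltPathNest

section Noncrossing

variable {α : Type*} {G : SimpleGraph α} {n : ℕ} {a b : Fin n → α}

theorem mem_ofFn_append_reverse_ofFn {x : α} :
    x ∈ List.ofFn a ++ (List.ofFn b).reverse ↔ x ∈ Set.range a ∪ Set.range b := by
  simp only [List.mem_append, List.mem_reverse, List.mem_ofFn', Set.mem_union]

theorem NoncrossingList.not_disjointPaths
    (h : NoncrossingList G (List.ofFn a ++ (List.ofFn b).reverse)) {i j k l : Fin n}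
    (hij : i < j) (hlk : l < k) :
    ¬ DisjointPaths G (Set.range a ∪ Set.range b) (a i) (b k) (a j) (b l) := by
  have hlength : (List.ofFn a ++ (List.ofFn b).reverse).length = n + n := by simp
  have hget_a (i : Fin n) (hi : i < (List.ofFn a ++ (List.ofFn b).reverse).length) :
      (List.ofFn a ++ (List.ofFn b).reverse).get ⟨i, hi⟩ = a i := by
    simp
  have hget_b (k : Fin n) (hk : n + k.rev < (List.ofFn a ++ (List.ofFn b).reverse).length) :
      (List.ofFn a ++ (List.ofFn b).reverse).get ⟨n + k.rev, hk⟩ = b k := by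
    have hrev : n - 1 - (n - (k + 1)) = (k : ℕ) := by omega
    simp [List.getElem_append_right, hrev]
  have hnot := h ⟨i, by omega⟩ ⟨j, by omega⟩ ⟨n + k.rev, by omega⟩ ⟨n + l.rev, by omega⟩ hij
    (Fin.mk_lt_mk.2 (by omega)) (Fin.mk_lt_mk.2 (Nat.add_lt_add_left (Fin.rev_lt_rev.2 hlk) n))
  rw [hget_a, hget_a, hget_b, hget_b] at hnot
  simpa only [mem_ofFn_append_reverse_ofFn, Set.ofPred_mem_eq] using hnot

theorem IsAltPathNest.lt_of_joins {s S : Finset α} {M : Finset (Sym2 α)}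
    {F : Finset (Σ x : α, Σ y : α, G.Walk x y)} {p q : Σ x : α, Σ y : α, G.Walk x y}
    (hF : IsAltPathNest G s M S F) (hS : (S : Set α) = Set.range a ∪ Set.range b)
    (hnc : NoncrossingList G (List.ofFn a ++ (List.ofFn b).reverse)) (hp : p ∈ F) (hq : q ∈ F)
    (hpq : p ≠ q) {i j k l : Fin n} (hik : Joins p (a i) (b k)) (hjl : Joins q (a j) (b l))
    (hij : i < j) : k < l := by
  rcases lt_trichotomy k l with hkl | rfl | hlk
  · exact hkl
  · exact absurd (hF.eq_of_mem_support hp hq hik.right_mem_support hjl.right_mem_support) hpq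
  · exact absurd (hS ▸ hF.disjointPaths hp hq hpq hik hjl) (hnc.not_disjointPaths hij hlk)

end Noncrossing

theorem nest_paths_join_ai_bi_general {α : Type*} {G : SimpleGraph α} {U V : Set α}
    (hG : G.IsBipartiteWith U V) {n : ℕ} {a b : Fin n → α} (ha : Function.Injective a)
    (hnc : NoncrossingList G (List.ofFn a ++ (List.ofFn b).reverse))
    (haU : ∀ i, a i ∈ U) (hbV : ∀ i, b i ∈ V) {s S : Finset α}
    (hS : (S : Set α) = Set.range a ∪ Set.range b) (hsS : Disjoint s S) {M : Finset (Sym2 α)}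
    {F : Finset (Σ x : α, Σ y : α, G.Walk x y)} (hF : IsAltPathNest G s M S F) :
    F.card = n ∧ ∀ i : Fin n, ∃ p ∈ F,
      (p.1 = a i ∧ p.2.1 = b i) ∨ (p.1 = b i ∧ p.2.1 = a i) := by
  have hab (i j : Fin n) : a i ≠ b j := hG.disjoint.ne_of_mem (haU i) (hbV j)
  have haS (i : Fin n) : a i ∈ S := Finset.mem_coe.1 (hS ▸ Or.inl (Set.mem_range_self i))
  have hjoin : ∀ p ∈ F, ∃ i j, Joins p (a i) (b j) := fun p =>
    hF.exists_joins_of_isBipartiteWith hG hsS hS haU hbV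
  refine ⟨(hF.card_eq hjoin ha hab haS).trans (Fintype.card_fin n), ?_⟩
  choose p hpF σ hpσ using hF.exists_mem_joins hjoin hab haS
  have hσ_mono : StrictMono σ := fun i j hij =>
    hF.lt_of_joins hS hnc (hpF i) (hpF j)
      (fun hpp => hij.ne (Joins.left_unique ha hab (hpσ i) (hpp ▸ hpσ j))) (hpσ i) (hpσ j) hij
  obtain rfl : σ = id := hσ_mono.eq_id
  exact fun i => ⟨p i, hpF i, hpσ i⟩

/-- In the bipartite determinant setting, every family of pairwise
vertex-disjoint `ML`-alternating paths with endpoint set exactly `A ∪ B` consists of `n`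
paths, one joining `a i` to `b i` for each `i`. -/
theorem nest_paths_join_ai_bi {α : Type*} [Fintype α] [DecidableEq α]
    (G : SimpleGraph α) (U V : Finset α) (hbip : IsBipartition G U V) (n : ℕ)
    (a b : Fin n → α)
    (hdist : (List.ofFn a ++ (List.ofFn b).reverse).Nodup)
    (hnc : NoncrossingList G (List.ofFn a ++ (List.ofFn b).reverse))
    (A B : Finset α) (hA : A = Finset.univ.image a) (hB : B = Finset.univ.image b)
    (hAU : A ⊆ U) (hBV : B ⊆ V)
    (ML : Finset (Sym2 α))
    (hML : IsPMOn G (Finset.univ \ (A ∪ B)) ML)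
    (huniq : ∀ m, IsPMOn G (Finset.univ \ (A ∪ B)) m → m = ML) :
    ∀ F : Finset (Σ x : α, Σ y : α, G.Walk x y),
      IsAltPathNest G (Finset.univ \ (A ∪ B)) ML (A ∪ B) F →
      F.card = n ∧ ∀ i : Fin n, ∃ p ∈ F,
        (p.1 = a i ∧ p.2.1 = b i) ∨ (p.1 = b i ∧ p.2.1 = a i) := by
  subst hA hB
  exact fun F hF => nest_paths_join_ai_bi_general hbip.isBipartiteWith
    (List.nodup_ofFn.1 hdist.of_append_left) hnc (by simpa [Finset.image_subset_iff] using hAU)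
    (by simpa [Finset.image_subset_iff] using hBV) (by simp) Finset.sdiff_disjoint hF
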